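/- arXiv:2506.17124 — 2 statements merged into one kernel-verified Lean document; each statement's English description precedes it below -/
import Mathlib

section
/- Let (S, A, p, r, γ, T, C, p_T) be a deterministic thought MDP with bounded nonnegative rewards and discount factor γ ∈ (0,1), and assume reachable positive reward: there exist s* ∈ S and a* ∈ A with r(s*, a*) > 0 such that for every s̃ ∈ S and every τ ∈ T there is a deterministic policy whose trajectory from (s̃, τ) reaches environment state s* at some finite time step. Then every optimal deterministic policy π* (one satisfying v_{π*}(s,τ) ≥ v_π(s,τ) for every deterministic policy π and all (s,τ)) never takes thought actions: π*(s,τ) ∈ A for all s ∈ S and τ ∈ T. -/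
/-- One step of the trajectory generated by a deterministic policy in a deterministic
thought MDP: an environment action moves the environment state, a thought action moves
the thought state. -/
def detStep {S T A C : Type} (p : S → A → S) (pT : S → T → C → T)
    (π : S → T → A ⊕ C) (st : S × T) : S × T :=
  match π st.1 st.2 with
  | Sum.inl a => (p st.1 a, st.2)
  | Sum.inr c => (st.1, pT st.1 st.2 c)

/-- The reward received at a state-thought pair: `r(s,a)` for an environment action,
`0` for a thought action. -/
def detReward {S T A C : Type} (r : S → A → ℝ) (π : S → T → A ⊕ C) (st : S × T) : ℝ :=
  match π st.1 st.2 with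
  | Sum.inl a => r st.1 a
  | Sum.inr _ => 0

/-- The value of a deterministic policy: `v_π(s,τ) = Σ_{t=0}^∞ γ^t r_t` along the
trajectory generated from `(s,τ)`. -/
noncomputable def detValue {S T A C : Type} (γ : ℝ) (p : S → A → S) (r : S → A → ℝ)
    (pT : S → T → C → T) (π : S → T → A ⊕ C) (st : S × T) : ℝ :=
  ∑' t : ℕ, γ ^ t * detReward r π ((detStep p pT π)^[t] st)

/-!
An optimal value function `V` dominates the one-step lookahead value of every action, since
deviating at a single state-thought pair to a strictly better action would improve the policy. The
value `V (s, τ)` is independent of `τ`: an environment action prescribed at `(s, τ')` is also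
available at `(s, τ)`, and a prescribed thought action only discounts, so each step of the optimal
policy from `(s, τ')` would enlarge a positive difference `V (s, τ') - V (s, τ)` by a factor of at
least `γ⁻¹`, whereas `V` is bounded. A thought action at `(s, τ)` therefore gives
`V (s, τ) = γ V (s, τ') = γ V (s, τ)`, that is `V (s, τ) = 0`. Reaching a positive reward
makes `V` positive everywhere.
-/

lemma le_of_forall_exists_sub_le_mul {X : Type*} {γ : ℝ} (hγ0 : 0 ≤ γ) (hγ1 : γ < 1)
    {f g : X → ℝ} (hf : BddAbove (Set.range f)) (hg : BddBelow (Set.range g))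
    (h : ∀ x, ∃ y, f x - g x ≤ γ * (f y - g y)) (x : X) : f x ≤ g x := by
  have : Nonempty X := ⟨x⟩
  have hbdd : BddAbove (Set.range fun x => f x - g x) := by
    obtain ⟨M, hM⟩ := hf
    obtain ⟨m, hm⟩ := hg
    exact ⟨M - m, Set.forall_mem_range.2 fun y =>
      sub_le_sub (hM (Set.mem_range_self y)) (hm (Set.mem_range_self y))⟩
  have hcontract : ⨆ x, (f x - g x) ≤ γ * ⨆ x, (f x - g x) := ciSup_le fun x => by
    obtain ⟨y, hy⟩ := h x
    exact hy.trans (mul_le_mul_of_nonneg_left (le_ciSup hbdd y) hγ0)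
  have hsup : ⨆ x, (f x - g x) ≤ 0 := by nlinarith only [hcontract, hγ1]
  exact sub_nonpos.1 ((le_ciSup hbdd x).trans hsup)

lemma abs_pow_mul_le {γ a B : ℝ} (hγ0 : 0 ≤ γ) (ha : |a| ≤ B) (t : ℕ) :
    |γ ^ t * a| ≤ γ ^ t * B := by
  rw [abs_mul, abs_of_nonneg (pow_nonneg hγ0 t)]
  exact mul_le_mul_of_nonneg_left ha (pow_nonneg hγ0 t)

section Value

variable {S T A C : Type} {γ : ℝ} {p : S → A → S} {r : S → A → ℝ} {pT : S → T → C → T}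

lemma detReward_nonneg (hr_nonneg : ∀ s a, 0 ≤ r s a) (π : S → T → A ⊕ C)
    (x : S × T) : 0 ≤ detReward r π x := by
  unfold detReward
  split
  · exact hr_nonneg _ _
  · exact le_rfl

lemma exists_abs_detReward_le (hr : ∃ B : ℝ, ∀ s a, |r s a| ≤ B) :
    ∃ B : ℝ, ∀ (π : S → T → A ⊕ C) (x : S × T), |detReward r π x| ≤ B := by
  obtain ⟨B, hB⟩ := hr
  refine ⟨max B 0, fun π x => ?_⟩
  unfold detReward
  split
  · exact (hB _ _).trans (le_max_left _ _)
  · exact abs_zero.trans_le (le_max_right _ _)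

lemma summable_pow_mul_detReward (hγ0 : 0 ≤ γ) (hγ1 : γ < 1) (hr : ∃ B : ℝ, ∀ s a, |r s a| ≤ B)
    (π : S → T → A ⊕ C) (x : S × T) :
    Summable fun t : ℕ => γ ^ t * detReward r π ((detStep p pT π)^[t] x) := by
  obtain ⟨B, hB⟩ := exists_abs_detReward_le (T := T) (C := C) hr
  exact ((summable_geometric_of_lt_one hγ0 hγ1).mul_right B).of_norm_bounded
    fun t => abs_pow_mul_le hγ0 (hB π _) t

lemma exists_abs_detValue_le (hγ0 : 0 ≤ γ) (hγ1 : γ < 1) (hr : ∃ B : ℝ, ∀ s a, |r s a| ≤ B) :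
    ∃ B : ℝ, ∀ (π : S → T → A ⊕ C) (x : S × T), |detValue γ p r pT π x| ≤ B := by
  obtain ⟨B, hB⟩ := exists_abs_detReward_le (T := T) (C := C) hr
  exact ⟨(1 - γ)⁻¹ * B, fun π x =>
    (Real.norm_eq_abs _).ge.trans
      (tsum_of_norm_bounded ((hasSum_geometric_of_lt_one hγ0 hγ1).mul_right B)
        fun t => abs_pow_mul_le hγ0 (hB π _) t)⟩

lemma bddAbove_range_detValue (hγ0 : 0 ≤ γ) (hγ1 : γ < 1) (hr : ∃ B : ℝ, ∀ s a, |r s a| ≤ B)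
    (π : S → T → A ⊕ C) : BddAbove (Set.range (detValue γ p r pT π)) :=
  (exists_abs_detValue_le hγ0 hγ1 hr).imp fun _ hB =>
    Set.forall_mem_range.2 fun x => (abs_le.1 (hB π x)).2

lemma bddBelow_range_detValue (hγ0 : 0 ≤ γ) (hγ1 : γ < 1) (hr : ∃ B : ℝ, ∀ s a, |r s a| ≤ B)
    (π : S → T → A ⊕ C) : BddBelow (Set.range (detValue γ p r pT π)) := by
  obtain ⟨B, hB⟩ := exists_abs_detValue_le (p := p) (pT := pT) hγ0 hγ1 hr
  exact ⟨-B, Set.forall_mem_range.2 fun x => (abs_le.1 (hB π x)).1⟩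

lemma detValue_nonneg_of_reward_nonneg (hγ0 : 0 ≤ γ) (hr_nonneg : ∀ s a, 0 ≤ r s a)
    (π : S → T → A ⊕ C) (x : S × T) : 0 ≤ detValue γ p r pT π x :=
  tsum_nonneg fun t => mul_nonneg (pow_nonneg hγ0 t) (detReward_nonneg hr_nonneg π _)

lemma detValue_const_inr (c : C) (x : S × T) :
    detValue γ p r pT (fun _ _ => Sum.inr c) x = 0 := by
  simp only [detValue, detReward, mul_zero, tsum_zero]

/-- The one-step lookahead value (Q-value) of the action `u` at `x`, when the continuation is valued
by `V`. The constant policy `u` serves to read off the reward and the successor of the single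
action `u`. -/
def lookaheadValue (γ : ℝ) (p : S → A → S) (r : S → A → ℝ) (pT : S → T → C → T)
    (V : S × T → ℝ) (x : S × T) (u : A ⊕ C) : ℝ :=
  detReward r (fun _ _ => u) x + γ * V (detStep p pT (fun _ _ => u) x)

lemma lookaheadValue_inl (V : S × T → ℝ) (x : S × T) (a : A) :
    lookaheadValue γ p r pT V x (Sum.inl a) = r x.1 a + γ * V (p x.1 a, x.2) :=
  rfl

lemma lookaheadValue_inr (V : S × T → ℝ) (x : S × T) (c : C) :
    lookaheadValue γ p r pT V x (Sum.inr c) = γ * V (x.1, pT x.1 x.2 c) :=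
  zero_add _

lemma lookaheadValue_policy (V : S × T → ℝ) (π : S → T → A ⊕ C) (x : S × T) :
    lookaheadValue γ p r pT V x (π x.1 x.2) = detReward r π x + γ * V (detStep p pT π x) :=
  rfl

lemma lookaheadValue_mono (hγ0 : 0 ≤ γ) {V W : S × T → ℝ} (h : ∀ x, V x ≤ W x)
    (x : S × T) (u : A ⊕ C) :
    lookaheadValue γ p r pT V x u ≤ lookaheadValue γ p r pT W x u :=
  add_le_add_right (mul_le_mul_of_nonneg_left (h _) hγ0) _

lemma detValue_eq_lookaheadValue (hγ0 : 0 ≤ γ) (hγ1 : γ < 1)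
    (hr : ∃ B : ℝ, ∀ s a, |r s a| ≤ B) (π : S → T → A ⊕ C) (x : S × T) :
    detValue γ p r pT π x = lookaheadValue γ p r pT (detValue γ p r pT π) x (π x.1 x.2) := by
  rw [lookaheadValue_policy]
  unfold detValue
  rw [(summable_pow_mul_detReward hγ0 hγ1 hr π x).tsum_eq_zero_add, ← tsum_mul_left]
  simp only [pow_zero, one_mul, Function.iterate_zero_apply, Function.iterate_succ_apply,
    pow_succ', mul_assoc]

theorem detValue_le_of_forall_le_lookaheadValue (hγ0 : 0 ≤ γ) (hγ1 : γ < 1)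
    (hr : ∃ B : ℝ, ∀ s a, |r s a| ≤ B) {π π' : S → T → A ⊕ C}
    (h : ∀ x, detValue γ p r pT π x ≤
      lookaheadValue γ p r pT (detValue γ p r pT π) x (π' x.1 x.2)) (x : S × T) :
    detValue γ p r pT π x ≤ detValue γ p r pT π' x := by
  refine le_of_forall_exists_sub_le_mul hγ0 hγ1 (bddAbove_range_detValue hγ0 hγ1 hr π)
    (bddBelow_range_detValue hγ0 hγ1 hr π') (fun y => ⟨detStep p pT π' y, ?_⟩) x
  have himprove := h y
  have hbellman := detValue_eq_lookaheadValue (p := p) (pT := pT) hγ0 hγ1 hr π' y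
  rw [lookaheadValue_policy] at himprove hbellman
  linarith

end Value

/-- Optimality among deterministic policies, from every state-thought pair simultaneously. -/
def IsOptimalPolicy {S T A C : Type} (γ : ℝ) (p : S → A → S) (r : S → A → ℝ)
    (pT : S → T → C → T) (πstar : S → T → A ⊕ C) : Prop :=
  ∀ (π : S → T → A ⊕ C) (s : S) (τ : T),
    detValue γ p r pT π (s, τ) ≤ detValue γ p r pT πstar (s, τ)

namespace IsOptimalPolicy

variable {S T A C : Type} {γ : ℝ} {p : S → A → S} {r : S → A → ℝ} {pT : S → T → C → T}
  {πstar : S → T → A ⊕ C}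

lemma detValue_nonneg [Nonempty C] (hopt : IsOptimalPolicy γ p r pT πstar) (x : S × T) :
    0 ≤ detValue γ p r pT πstar x := by
  obtain ⟨c⟩ := ‹Nonempty C›
  exact (detValue_const_inr c x).ge.trans (hopt _ x.1 x.2)

theorem lookaheadValue_le (hopt : IsOptimalPolicy γ p r pT πstar) (hγ0 : 0 ≤ γ) (hγ1 : γ < 1)
    (hr : ∃ B : ℝ, ∀ s a, |r s a| ≤ B) (x : S × T) (u : A ⊕ C) :
    lookaheadValue γ p r pT (detValue γ p r pT πstar) x u ≤ detValue γ p r pT πstar x := by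
  classical
  by_contra! hbetter
  let deviation : S × T → A ⊕ C := Function.update (Function.uncurry πstar) x u
  let π' : S → T → A ⊕ C := Function.curry deviation
  have hπ' : π' x.1 x.2 = u := Function.update_self ..
  have himprove : ∀ y, detValue γ p r pT πstar y ≤
      lookaheadValue γ p r pT (detValue γ p r pT πstar) y (π' y.1 y.2) :=
    (Function.forall_update_iff (Function.uncurry πstar) fun y v =>
      detValue γ p r pT πstar y ≤ lookaheadValue γ p r pT (detValue γ p r pT πstar) y v).2
      ⟨hbetter.le, fun y _ => (detValue_eq_lookaheadValue hγ0 hγ1 hr πstar y).le⟩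
  have hle := detValue_le_of_forall_le_lookaheadValue hγ0 hγ1 hr himprove
  refine (hopt π' x.1 x.2).not_gt ?_
  calc detValue γ p r pT πstar x
      < lookaheadValue γ p r pT (detValue γ p r pT πstar) x u := hbetter
    _ ≤ lookaheadValue γ p r pT (detValue γ p r pT π') x u := lookaheadValue_mono hγ0 hle x u
    _ = detValue γ p r pT π' x := by rw [detValue_eq_lookaheadValue hγ0 hγ1 hr π' x, hπ']

theorem detValue_thought_irrel (hopt : IsOptimalPolicy γ p r pT πstar) (hγ0 : 0 ≤ γ)
    (hγ1 : γ < 1) (hr : ∃ B : ℝ, ∀ s a, |r s a| ≤ B) (s : S) (τ τ' : T) :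
    detValue γ p r pT πstar (s, τ) = detValue γ p r pT πstar (s, τ') := by
  set V := detValue γ p r pT πstar
  suffices hle : ∀ τ τ', V (s, τ') ≤ V (s, τ) from le_antisymm (hle τ' τ) (hle τ τ')
  intro τ τ'
  refine le_of_forall_exists_sub_le_mul (g := fun x => V (x.1, τ)) hγ0 hγ1
    (bddAbove_range_detValue hγ0 hγ1 hr πstar)
    ((bddBelow_range_detValue hγ0 hγ1 hr πstar).mono (Set.range_comp_subset_range _ V))
    (fun x => ?_) (s, τ')
  have hbellman : V x = _ := detValue_eq_lookaheadValue hγ0 hγ1 hr πstar x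
  rcases hu : πstar x.1 x.2 with a | c
  · refine ⟨(p x.1 a, x.2), ?_⟩
    rw [hu, lookaheadValue_inl] at hbellman
    have hact : r x.1 a + γ * V (p x.1 a, τ) ≤ V (x.1, τ) :=
      hopt.lookaheadValue_le hγ0 hγ1 hr (x.1, τ) (Sum.inl a)
    linarith
  · refine ⟨(x.1, pT x.1 x.2 c), ?_⟩
    rw [hu, lookaheadValue_inr] at hbellman
    have : Nonempty C := ⟨c⟩
    have hdiscount : γ * V (x.1, τ) ≤ V (x.1, τ) :=
      mul_le_of_le_one_left (hopt.detValue_nonneg (x.1, τ)) hγ1.le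
    linarith

lemma detValue_pos_of_iterate (hopt : IsOptimalPolicy γ p r pT πstar) (hγ0 : 0 < γ) (hγ1 : γ < 1)
    (hr : ∃ B : ℝ, ∀ s a, |r s a| ≤ B) (hr_nonneg : ∀ s a, 0 ≤ r s a) (π : S → T → A ⊕ C)
    {t : ℕ} {x : S × T} {a : A} (ha : 0 < r ((detStep p pT π)^[t] x).1 a) :
    0 < detValue γ p r pT πstar x := by
  induction t generalizing x with
  | zero =>
    have hact := hopt.lookaheadValue_le hγ0.le hγ1 hr x (Sum.inl a)
    rw [lookaheadValue_inl] at hact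
    exact (add_pos_of_pos_of_nonneg ha
      (mul_nonneg hγ0.le (detValue_nonneg_of_reward_nonneg hγ0.le hr_nonneg πstar _))).trans_le hact
  | succ t ih =>
    have hstep := hopt.lookaheadValue_le hγ0.le hγ1 hr x (π x.1 x.2)
    rw [lookaheadValue_policy] at hstep
    rw [Function.iterate_succ_apply] at ha
    exact (add_pos_of_nonneg_of_pos (detReward_nonneg hr_nonneg π x)
      (mul_pos hγ0 (ih ha))).trans_le hstep

end IsOptimalPolicy

theorem optimal_policy_never_thinks_general {S T A C : Type} {γ : ℝ} (hγ0 : 0 ≤ γ) (hγ1 : γ < 1)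
    {p : S → A → S} {r : S → A → ℝ} (hr : ∃ B : ℝ, ∀ s a, |r s a| ≤ B) {pT : S → T → C → T}
    {πstar : S → T → A ⊕ C} (hopt : IsOptimalPolicy γ p r pT πstar) {s : S} {τ : T}
    (hpos : 0 < detValue γ p r pT πstar (s, τ)) :
    ∃ a : A, πstar s τ = Sum.inl a := by
  rcases hu : πstar s τ with a | c
  · exact ⟨a, rfl⟩
  · have hthink := detValue_eq_lookaheadValue (p := p) (pT := pT) hγ0 hγ1 hr πstar (s, τ)
    rw [hu, lookaheadValue_inr, hopt.detValue_thought_irrel hγ0 hγ1 hr s (pT s τ c) τ] at hthink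
    exact ((mul_lt_of_lt_one_left hpos hγ1).ne' hthink).elim

/-- In a deterministic thought MDP with bounded nonnegative rewards
and reachable positive reward, any optimal deterministic policy never takes thought
actions. -/
theorem optimal_policy_never_thinks {S T A C : Type}
    (γ : ℝ) (hγ0 : 0 < γ) (hγ1 : γ < 1)
    (p : S → A → S) (r : S → A → ℝ)
    (hr_nonneg : ∀ s a, 0 ≤ r s a) (hr_bdd : ∃ B : ℝ, ∀ s a, r s a ≤ B)
    (pT : S → T → C → T)
    (hreach : ∃ (sstar : S) (astar : A), 0 < r sstar astar ∧
      ∀ (stilde : S) (τ : T), ∃ (π' : S → T → A ⊕ C) (t : ℕ),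
        ((detStep p pT π')^[t] (stilde, τ)).1 = sstar)
    (πstar : S → T → A ⊕ C)
    (hopt : ∀ (π : S → T → A ⊕ C) (s : S) (τ : T),
      detValue γ p r pT π (s, τ) ≤ detValue γ p r pT πstar (s, τ)) :
    ∀ (s : S) (τ : T), ∃ a : A, πstar s τ = Sum.inl a := by
  obtain ⟨sstar, astar, hstar, hreach⟩ := hreach
  have hr : ∃ B : ℝ, ∀ s a, |r s a| ≤ B :=
    hr_bdd.imp fun _ hB s a => (abs_of_nonneg (hr_nonneg s a)).trans_le (hB s a)
  intro s τ
  obtain ⟨π, t, ht⟩ := hreach s τ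
  exact optimal_policy_never_thinks_general hγ0.le hγ1 hr hopt
    (IsOptimalPolicy.detValue_pos_of_iterate hopt hγ0 hγ1 hr hr_nonneg π (ht ▸ hstar))
end

section
/- Let (S, A, p, r, γ, T, C, p_T) be a deterministic thought MDP with bounded strictly negative rewards (r(s,a) < 0 for all s ∈ S, a ∈ A), discount factor γ ∈ (0,1), and nonempty thought action set C. Then: (i) any deterministic policy π_think that takes only thought actions (π_think(s,τ) ∈ C for all (s,τ)) has value v_{π_think}(s,τ) = 0 for all (s,τ); and (ii) any deterministic policy π whose trajectory from (s,τ) takes an environment action at some finite time step has v_π(s,τ) < 0. Consequently v_{π_think}(s,τ) > v_π(s,τ) for every such π: with all-negative rewards, perpetually taking thought actions strictly dominates ever taking an environment action. -/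
/-!
Along any trajectory the rewards are nonpositive, and a reward is negative as soon as an environment
action is taken. Boundedness makes the discounted series converge by comparison with a geometric
series, so one negative term makes its sum negative. Without convergence `tsum` would return the
junk value `0` and the strict inequality would be lost.
-/

lemma summable_pow_mul_of_norm_le {R : Type*} [NormedRing R] [CompleteSpace R] {x : R}
    {u : ℕ → R} {B : ℝ} (hx : ‖x‖ < 1) (hu : ∀ t, ‖u t‖ ≤ B) :
    Summable fun t ↦ x ^ t * u t :=
  .of_norm_bounded ((summable_norm_geometric_of_norm_lt_one hx).mul_right B) fun t ↦
    norm_mul_le_of_le le_rfl (hu t)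

lemma tsum_pow_mul_neg {γ : ℝ} {u : ℕ → ℝ} {B : ℝ} (hγ0 : 0 < γ) (hγ1 : γ < 1)
    (hu_bdd : ∀ t, |u t| ≤ B) (hu : ∀ t, u t ≤ 0) {t : ℕ} (ht : u t < 0) :
    ∑' t, γ ^ t * u t < 0 := by
  have hsum : Summable fun t ↦ γ ^ t * u t :=
    summable_pow_mul_of_norm_le (by rwa [Real.norm_of_nonneg hγ0.le]) hu_bdd
  have hle : ∀ t, γ ^ t * u t ≤ 0 := fun t ↦
    mul_nonpos_of_nonneg_of_nonpos (pow_nonneg hγ0.le t) (hu t)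
  have hlt : γ ^ t * u t < 0 := mul_neg_of_pos_of_neg (pow_pos hγ0 t) ht
  exact hasSum_lt hle hlt hsum.hasSum hasSum_zero

section ThoughtMDP

variable {S T A C : Type} {r : S → A → ℝ} {π : S → T → A ⊕ C} {st : S × T}

lemma detReward_of_eq_inl {a : A} (h : π st.1 st.2 = Sum.inl a) :
    detReward r π st = r st.1 a := by
  simp only [detReward, h]

lemma detReward_of_eq_inr {c : C} (h : π st.1 st.2 = Sum.inr c) : detReward r π st = 0 := by
  simp only [detReward, h]

lemma detReward_nonpos (hr : ∀ s a, r s a ≤ 0) (π : S → T → A ⊕ C) (st : S × T) :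
    detReward r π st ≤ 0 := by
  cases h : π st.1 st.2 with
  | inl a => exact (detReward_of_eq_inl h).trans_le (hr st.1 a)
  | inr c => exact (detReward_of_eq_inr h).le

-- The bound is `|B|` because `B` may be negative when `S` or `A` is empty.
lemma abs_detReward_le_abs {B : ℝ} (hr : ∀ s a, |r s a| ≤ B) (π : S → T → A ⊕ C) (st : S × T) :
    |detReward r π st| ≤ |B| := by
  cases h : π st.1 st.2 with
  | inl a => simpa only [detReward_of_eq_inl h] using (hr st.1 a).trans (le_abs_self B)
  | inr c => simpa only [detReward_of_eq_inr h, abs_zero] using abs_nonneg B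

lemma detValue_eq_zero_of_forall_eq_inr (hπ : ∀ s τ, ∃ c : C, π s τ = Sum.inr c) (γ : ℝ)
    (p : S → A → S) (r : S → A → ℝ) (pT : S → T → C → T) (st : S × T) :
    detValue γ p r pT π st = 0 := by
  have hreward (x : S × T) : detReward r π x = 0 :=
    (hπ x.1 x.2).elim fun _ ↦ detReward_of_eq_inr
  simp only [detValue, hreward, mul_zero, tsum_zero]

lemma detValue_neg_of_detReward_neg {γ B : ℝ} (hγ0 : 0 < γ) (hγ1 : γ < 1)
    (hr : ∀ s a, r s a ≤ 0) (hr_bdd : ∀ s a, |r s a| ≤ B)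
    {p : S → A → S} {pT : S → T → C → T} {t : ℕ}
    (ht : detReward r π ((detStep p pT π)^[t] st) < 0) :
    detValue γ p r pT π st < 0 :=
  tsum_pow_mul_neg hγ0 hγ1 (fun _ ↦ abs_detReward_le_abs hr_bdd π _)
    (fun _ ↦ detReward_nonpos hr π _) ht

end ThoughtMDP

/-- In a deterministic thought MDP with bounded strictly negative
rewards: (i) a policy that only takes thought actions has value 0 everywhere;
(ii) a policy whose trajectory from `(s,τ)` ever takes an environment action has
strictly negative value there; consequently perpetual thinking strictly dominates. -/
theorem negative_rewards_thinking_dominates {S T A C : Type} [Nonempty C]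
    (γ : ℝ) (hγ0 : 0 < γ) (hγ1 : γ < 1)
    (p : S → A → S) (r : S → A → ℝ)
    (hr_neg : ∀ s a, r s a < 0) (hr_bdd : ∃ B : ℝ, ∀ s a, |r s a| ≤ B)
    (pT : S → T → C → T) :
    (∀ πthink : S → T → A ⊕ C, (∀ s τ, ∃ c : C, πthink s τ = Sum.inr c) →
      ∀ (s : S) (τ : T), detValue γ p r pT πthink (s, τ) = 0) ∧
    (∀ (π : S → T → A ⊕ C) (s : S) (τ : T),
      (∃ (t : ℕ) (a : A),
        π ((detStep p pT π)^[t] (s, τ)).1 ((detStep p pT π)^[t] (s, τ)).2 = Sum.inl a) →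
      detValue γ p r pT π (s, τ) < 0) ∧
    (∀ (πthink π : S → T → A ⊕ C), (∀ s τ, ∃ c : C, πthink s τ = Sum.inr c) →
      ∀ (s : S) (τ : T),
      (∃ (t : ℕ) (a : A),
        π ((detStep p pT π)^[t] (s, τ)).1 ((detStep p pT π)^[t] (s, τ)).2 = Sum.inl a) →
      detValue γ p r pT π (s, τ) < detValue γ p r pT πthink (s, τ)) := by
  obtain ⟨B, hB⟩ := hr_bdd
  have value_think (πthink : S → T → A ⊕ C) (hthink : ∀ s τ, ∃ c : C, πthink s τ = Sum.inr c)
      (s : S) (τ : T) : detValue γ p r pT πthink (s, τ) = 0 :=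
    detValue_eq_zero_of_forall_eq_inr hthink γ p r pT (s, τ)
  have value_act (π : S → T → A ⊕ C) (s : S) (τ : T) (hact : ∃ (t : ℕ) (a : A),
      π ((detStep p pT π)^[t] (s, τ)).1 ((detStep p pT π)^[t] (s, τ)).2 = Sum.inl a) :
      detValue γ p r pT π (s, τ) < 0 := by
    obtain ⟨t, a, ha⟩ := hact
    exact detValue_neg_of_detReward_neg hγ0 hγ1 (fun s a ↦ (hr_neg s a).le) hB
      ((detReward_of_eq_inl ha).trans_lt (hr_neg _ a))
  exact ⟨value_think, value_act, fun πthink π hthink s τ hact ↦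
    (value_act π s τ hact).trans_eq (value_think πthink hthink s τ).symm⟩
end
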